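/- arXiv:2604.06735 — 2 statements merged into one kernel-verified Lean document; each statement's English description precedes it below -/
import Mathlib

section
/- For n >= 1, the number of ascent sequences of length n avoiding the three patterns 0101, 0102, and 0112 equals 2^n - n. -/
/-- Number of ascents of a sequence (list) of natural numbers. -/
def asc (l : List ℕ) : ℕ :=
  ((List.range (l.length - 1)).filter (fun j => l.getD j 0 < l.getD (j + 1) 0)).length

/-- `x` is an ascent sequence: nonempty, starts with 0, and each later entry is
at most one more than the number of ascents of the preceding prefix. -/
def IsAscSeq (x : List ℕ) : Prop :=
  x ≠ [] ∧ x.getD 0 0 = 0 ∧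
    ∀ i, 1 ≤ i → i < x.length → x.getD i 0 ≤ 1 + asc (x.take i)

/-- `x` contains the pattern `p`: some subsequence of `x` is order-isomorphic
(including equalities) to `p`, i.e. its reduction equals `p`. -/
def Contains (p x : List ℕ) : Prop :=
  ∃ y : List ℕ, y.Sublist x ∧ y.length = p.length ∧
    ∀ i j, i < p.length → j < p.length →
      (y.getD i 0 < y.getD j 0 ↔ p.getD i 0 < p.getD j 0)

/-- `x` avoids the pattern `p`. -/
def Avoids (p x : List ℕ) : Prop := ¬ Contains p x

/-!
An ascent sequence avoids 0101, 0102 and 0112 exactly when it has the form `0ᵏ 0 1 2 ⋯ m t` with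
`t` weakly decreasing and bounded by `m`. Indeed, once the maximum `m ≥ 1` has been reached by
climbing through all of `0, …, m`, an increase from `b` to `c` behind it would complete the
subsequence `0 b b c` if `b = m`, or `b (b+1) b c` if `b < m`.
If `s` letters follow the `k + 1` leading zeros, there are `s.choose m` such words for each `m ≤ s`,
hence `2 ^ s - 1` with `m ≥ 1`. Summing over `s < n` and adding the zero word gives `2 ^ n - n`.
-/

open List

/-! ### Pattern containment -/

theorem contains_iff_exists_strictMonoOn {p x : List ℕ} :
    Contains p x ↔ ∃ f : ℕ → ℕ, StrictMonoOn f {a | a ∈ p} ∧ p.map f <+ x := by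
  constructor
  · rintro ⟨y, hyx, hlen, hlt⟩
    have idxOf_spec {a : ℕ} (ha : a ∈ p) : p.idxOf a < p.length ∧ p.getD (p.idxOf a) 0 = a :=
      ⟨idxOf_lt_length_of_mem ha, by
        rw [getD_eq_getElem _ _ (idxOf_lt_length_of_mem ha), getElem_idxOf]⟩
    refine ⟨fun a => y.getD (p.idxOf a) 0, fun a ha b hb hab => ?_, ?_⟩
    · obtain ⟨hia, hpa⟩ := idxOf_spec ha
      obtain ⟨hib, hpb⟩ := idxOf_spec hb
      exact (hlt _ _ hia hib).2 (by rwa [hpa, hpb])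
    · convert hyx
      refine ext_getElem (by simp [hlen]) fun i hi hi' => ?_
      rw [length_map] at hi
      obtain ⟨hj, hpj⟩ := idxOf_spec (getElem_mem hi)
      have hlt₁ := hlt _ _ hj hi
      have hlt₂ := hlt _ _ hi hj
      rw [hpj, getD_eq_getElem _ _ hi, getD_eq_getElem y _ hi'] at hlt₁ hlt₂
      rw [getElem_map]
      lia
  · rintro ⟨f, hf, hfx⟩
    refine ⟨p.map f, hfx, length_map f, fun i j hi hj => ?_⟩
    simpa [hi, hj] using hf.lt_iff_lt (getElem_mem hi) (getElem_mem hj)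

theorem contains_of_map_getD_sublist {p v x : List ℕ} (hv : v.SortedLT)
    (hp : ∀ i ∈ p, i < v.length) (h : p.map (v.getD · 0) <+ x) : Contains p x := by
  refine contains_iff_exists_strictMonoOn.2 ⟨_, fun i hi j hj hij => ?_, h⟩
  simpa [hp i hi, hp j hj] using hv.getElem_lt_getElem_of_lt hij

theorem Avoids.of_sublist {p x y : List ℕ} (hx : Avoids p x) (hyx : y <+ x) : Avoids p y :=
  fun ⟨z, hzy, hz⟩ => hx ⟨z, hzy.trans hyx, hz⟩

/-- Simultaneous avoidance of the three patterns 0101, 0102 and 0112. -/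
def AvoidsPatterns (x : List ℕ) : Prop :=
  Avoids [0, 1, 0, 1] x ∧ Avoids [0, 1, 0, 2] x ∧ Avoids [0, 1, 1, 2] x

theorem AvoidsPatterns.of_sublist {x y : List ℕ} (hx : AvoidsPatterns x) (hyx : y <+ x) :
    AvoidsPatterns y :=
  ⟨hx.1.of_sublist hyx, hx.2.1.of_sublist hyx, hx.2.2.of_sublist hyx⟩

/-! ### Ascent sequences -/

theorem asc_append_pair (l : List ℕ) (a b : ℕ) :
    asc (l ++ [a, b]) = asc (l ++ [a]) + if a < b then 1 else 0 := by
  have getD_init {j : ℕ} (hj : j < l.length + 1) :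
      (l ++ [a, b]).getD j 0 = (l ++ [a]).getD j 0 := by
    rw [append_cons, getD_append _ _ _ _ (by simpa using hj)]
  have filter_init :
      (range l.length).filter (fun j => (l ++ [a, b]).getD j 0 < (l ++ [a, b]).getD (j + 1) 0) =
        (range l.length).filter (fun j => (l ++ [a]).getD j 0 < (l ++ [a]).getD (j + 1) 0) :=
    filter_congr fun j hj => by
      rw [mem_range] at hj
      rw [getD_init (by lia), getD_init (by lia)]
  have hlen : (l ++ [a, b]).length - 1 = l.length + 1 := by simp
  have hlen' : (l ++ [a]).length - 1 = l.length := by simp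
  rw [asc, asc, hlen, hlen', range_succ, filter_append, length_append, filter_init]
  split_ifs with hab <;> simp [hab]

theorem asc_le_asc_concat (l : List ℕ) (b : ℕ) : asc l ≤ asc (l ++ [b]) := by
  rcases eq_nil_or_concat' l with rfl | ⟨l, a, rfl⟩
  · simp [asc]
  · simp [asc_append_pair]

theorem asc_le_asc_append (l t : List ℕ) : asc l ≤ asc (l ++ t) := by
  induction t using reverseRecOn with
  | nil => simp
  | append_singleton t b ih =>
    rw [← append_assoc]
    exact ih.trans (asc_le_asc_concat _ b)

theorem isAscSeq_singleton_iff {a : ℕ} : IsAscSeq [a] ↔ a = 0 := by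
  simp only [IsAscSeq, length_singleton]
  refine ⟨fun h => by simpa using h.2.1, fun h => ⟨by simp, by simpa using h, by lia⟩⟩

theorem isAscSeq_concat_iff {l : List ℕ} {a : ℕ} (hl : l ≠ []) :
    IsAscSeq (l ++ [a]) ↔ IsAscSeq l ∧ a ≤ 1 + asc l := by
  have hpos : 0 < l.length := length_pos_iff.2 hl
  have entry_concat {i : ℕ} (hi : i < l.length) :
      (l ++ [a]).getD i 0 = l.getD i 0 ∧ (l ++ [a]).take i = l.take i :=
    ⟨getD_append _ _ _ _ hi, take_append_of_le_length hi.le⟩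
  have entry_last : (l ++ [a]).getD l.length 0 = a ∧ (l ++ [a]).take l.length = l := by simp
  constructor
  · rintro ⟨-, hzero, hbound⟩
    refine ⟨⟨hl, by rwa [← (entry_concat hpos).1], fun i hi hil => ?_⟩, ?_⟩
    · simpa only [entry_concat hil] using hbound i hi (by grind)
    · simpa only [entry_last] using hbound l.length hpos (by simp)
  · rintro ⟨⟨-, hzero, hbound⟩, ha⟩
    refine ⟨by simp, by rwa [(entry_concat hpos).1], fun i hi hil => ?_⟩
    rcases (Nat.lt_succ_iff.1 (by simpa using hil)).lt_or_eq with hil | rfl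
    · simpa only [entry_concat hil] using hbound i hi hil
    · simpa only [entry_last] using ha

theorem IsAscSeq.append {l t : List ℕ} (hl : IsAscSeq l) (ht : ∀ a ∈ t, a ≤ 1 + asc l) :
    IsAscSeq (l ++ t) := by
  induction t using reverseRecOn with
  | nil => simpa using hl
  | append_singleton t b ih =>
    rw [← append_assoc, isAscSeq_concat_iff (by simp [hl.1])]
    have hb : b ≤ 1 + asc l := ht b (by simp)
    exact ⟨ih fun a ha => ht a (by simp [ha]), hb.trans (by grw [← asc_le_asc_append l t])⟩

/-! ### The words `0ᵏ 0 1 2 ⋯ m t` -/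

/-- The word `0ᵏ 0 1 2 ⋯ m t`: it has `k + 1` leading zeros when `m ≥ 1`. -/
def climbWord (k m : ℕ) (t : List ℕ) : List ℕ :=
  replicate k 0 ++ range (m + 1) ++ t

@[simp]
theorem length_climbWord (k m : ℕ) (t : List ℕ) :
    (climbWord k m t).length = k + m + 1 + t.length := by
  simp only [climbWord, length_append, length_replicate, length_range]
  lia

theorem climbWord_append (k m : ℕ) (t u : List ℕ) :
    climbWord k m t ++ u = climbWord k m (t ++ u) := by
  simp [climbWord]

theorem climbWord_succ_left_zero (k : ℕ) : climbWord (k + 1) 0 [] = climbWord k 0 [0] := by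
  simp [climbWord, replicate_succ']

theorem climbWord_succ_nil (k m : ℕ) : climbWord k (m + 1) [] = climbWord k m [m + 1] := by
  simp [climbWord, range_succ]

theorem self_mem_climbWord (k m : ℕ) (t : List ℕ) : m ∈ climbWord k m t := by
  simp [climbWord]

theorem le_of_mem_climbWord {k m a : ℕ} {t : List ℕ} (ht : ∀ b ∈ t, b ≤ m)
    (ha : a ∈ climbWord k m t) : a ≤ m := by
  simp only [climbWord, mem_append, mem_replicate, mem_range] at ha
  rcases ha with (⟨-, rfl⟩ | ha) | ha
  · exact Nat.zero_le m
  · exact Nat.lt_succ_iff.1 ha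
  · exact ht a ha

theorem asc_climbWord_nil (k m : ℕ) : asc (climbWord k m []) = m := by
  induction m with
  | zero =>
    induction k with
    | zero => simp [climbWord, asc]
    | succ k ih => simpa [climbWord, replicate_succ', asc_append_pair] using ih
  | succ m ih =>
    have hinit : climbWord k m [] = replicate k 0 ++ range m ++ [m] := by
      simp [climbWord, range_succ]
    have hlast : climbWord k (m + 1) [] = replicate k 0 ++ range m ++ [m, m + 1] := by
      simp [climbWord, range_succ]
    rw [hlast, asc_append_pair, ← hinit, ih, if_pos m.lt_succ_self]

theorem isAscSeq_climbWord_nil (k m : ℕ) : IsAscSeq (climbWord k m []) := by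
  induction m with
  | zero =>
    have hzero : climbWord k 0 [] = [0] ++ replicate k 0 := by
      simp [climbWord, ← replicate_succ', replicate_succ]
    rw [hzero]
    exact (isAscSeq_singleton_iff.2 rfl).append (by simp)
  | succ m ih =>
    have hstep : IsAscSeq (climbWord k m [] ++ [m + 1]) :=
      ih.append (by simp [asc_climbWord_nil, add_comm])
    rwa [climbWord_append, nil_append, ← climbWord_succ_nil] at hstep

theorem isAscSeq_climbWord {k m : ℕ} {t : List ℕ} (ht : ∀ a ∈ t, a ≤ 1 + m) :
    IsAscSeq (climbWord k m t) := by
  simpa only [climbWord_append, nil_append] using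
    (isAscSeq_climbWord_nil k m).append (t := t) (by rwa [asc_climbWord_nil])

theorem le_of_sublist_climbWord {k m a b c : ℕ} {t : List ℕ} (ht : t.SortedGE)
    (h : [a, b, c] <+ climbWord k m t) (hba : b ≤ a) (ha : a ≠ 0) : c ≤ b := by
  have hclimb : (replicate k 0 ++ range (m + 1)).Pairwise fun a b => a = 0 ∨ a < b := by
    refine pairwise_append.2 ⟨by simp [pairwise_replicate], ?_, by simp +contextual⟩
    exact pairwise_lt_range.imp Or.inr
  obtain ⟨l₁, l₂, hl, hl₁, hl₂⟩ := sublist_append_iff.1 h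
  match l₁ with
  | [] =>
    subst hl
    exact ht.pairwise.forall_sublist (sublist_of_cons_sublist hl₂)
  | [_] =>
    obtain ⟨rfl, rfl⟩ := cons.inj hl
    exact ht.pairwise.forall_sublist hl₂
  | a' :: b' :: l =>
    obtain ⟨rfl, rfl, -⟩ : a = a' ∧ b = b' ∧ _ := by simpa using hl
    have hab := hclimb.forall_sublist ((sublist_append_left [a, b] l).trans hl₁)
    lia

theorem avoids_climbWord {i j p q k m : ℕ} {t : List ℕ} (ht : t.SortedGE) (hij : i < j)
    (hpj : p ≤ j) (hpq : p < q) : Avoids [i, j, p, q] (climbWord k m t) := by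
  intro hcontains
  obtain ⟨f, hf, hsub⟩ := contains_iff_exists_strictMonoOn.1 hcontains
  have hfij : f i < f j := hf (by simp) (by simp) hij
  have hfpj : f p ≤ f j := hf.monotoneOn (by simp) (by simp) hpj
  have hfpq : f p < f q := hf (by simp) (by simp) hpq
  exact hfpq.not_ge <| le_of_sublist_climbWord ht (sublist_of_cons_sublist hsub) hfpj (by lia)

theorem avoidsPatterns_climbWord {k m : ℕ} {t : List ℕ} (ht : t.SortedGE) :
    AvoidsPatterns (climbWord k m t) := by
  refine ⟨?_, ?_, ?_⟩ <;> exact avoids_climbWord ht (by simp) (by simp) (by simp)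

theorem pair_sublist_range {a b n : ℕ} (hab : a < b) (hbn : b < n) : [a, b] <+ range n := by
  refine sublist_of_subperm_of_sortedLE (Nodup.subperm (by simp [hab.ne]) ?_) ?_
    (sortedLT_range n).sortedLE
  · simp [hab.trans hbn, hbn]
  · simp [sortedLE_iff_pairwise, hab.le]

theorem AvoidsPatterns.le_of_sublist {k m b c : ℕ} {t : List ℕ}
    (h : AvoidsPatterns (climbWord k m t)) (hm : m ≠ 0) (hbm : b ≤ m) (hbc : [b, c] <+ t) :
    c ≤ b := by
  obtain ⟨h0101, h0102, h0112⟩ := h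
  by_contra! hlt
  have prepend {a a' : ℕ} (haa' : a < a') (ha' : a' ≤ m) : [a, a', b, c] <+ climbWord k m t :=
    ((pair_sublist_range haa' (by lia)).trans (sublist_append_right _ _)).append hbc
  rcases hbm.eq_or_lt with rfl | hbm
  · have hsub := prepend (Nat.pos_of_ne_zero hm) le_rfl
    exact h0112 <| contains_of_map_getD_sublist (v := [0, b, c])
      (by grind) (by simp) hsub
  · have hsub := prepend (Nat.lt_succ_self b) hbm
    rcases (Nat.succ_le_of_lt hlt).eq_or_lt with rfl | hlt
    · exact h0101 <| contains_of_map_getD_sublist (v := [b, b + 1])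
        (by simp [sortedLT_iff_pairwise]) (by simp) hsub
    · exact h0102 <| contains_of_map_getD_sublist (v := [b, b + 1, c])
        (by grind) (by simp) hsub

/-- The words `0ᵏ 0 1 2 ⋯ m t` with `t` weakly decreasing and bounded by `m`. All zeros are put into
`0ᵏ 0` when `m = 0`, so that `k`, `m` and `t` are determined by the word. -/
def IsClimbing (x : List ℕ) : Prop :=
  ∃ k m t, x = climbWord k m t ∧ t.SortedGE ∧ (∀ a ∈ t, a ≤ m) ∧ (m = 0 → t = [])

theorem IsAscSeq.isClimbing {x : List ℕ} (hx : IsAscSeq x) (havoid : AvoidsPatterns x) :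
    IsClimbing x := by
  induction x using reverseRecOn with
  | nil => exact absurd rfl hx.1
  | append_singleton y a ih =>
    rcases eq_or_ne y [] with rfl | hy
    · obtain rfl : a = 0 := isAscSeq_singleton_iff.1 hx
      exact ⟨0, 0, [], by simp [climbWord], by simp [sortedGE_iff_pairwise]⟩
    obtain ⟨hyasc, hay⟩ := (isAscSeq_concat_iff hy).1 hx
    obtain ⟨k, m, t, rfl, ht, htm, hmt⟩ := ih hyasc (havoid.of_sublist (sublist_append_left _ _))
    rw [climbWord_append] at havoid ⊢
    rcases eq_or_ne t [] with rfl | htne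
    · rw [asc_climbWord_nil] at hay
      obtain rfl | ham : a = m + 1 ∨ a ≤ m := by lia
      · exact ⟨k, m + 1, [], (climbWord_succ_nil k m).symm, by simp [sortedGE_iff_pairwise]⟩
      rcases eq_or_ne m 0 with rfl | hm
      · obtain rfl : a = 0 := by lia
        exact ⟨k + 1, 0, [], (climbWord_succ_left_zero k).symm, by simp [sortedGE_iff_pairwise]⟩
      · exact ⟨k, m, [a], rfl, (pairwise_singleton _ _).sortedGE, by simpa, by simp [hm]⟩
    · have hm : m ≠ 0 := mt hmt htne
      have hat : ∀ b ∈ t, a ≤ b := fun b hb =>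
        havoid.le_of_sublist hm (htm b hb) ((singleton_sublist.2 hb).append (Sublist.refl [a]))
      obtain ⟨b, hb⟩ := exists_mem_of_ne_nil t htne
      have ham : a ≤ m := (hat b hb).trans (htm b hb)
      refine ⟨k, m, t ++ [a], rfl, ?_, by simpa [or_imp, forall_and] using ⟨htm, ham⟩, by lia⟩
      exact (pairwise_append.2 ⟨ht.pairwise, pairwise_singleton _ _, by simpa using hat⟩).sortedGE

theorem isAscSeq_and_avoidsPatterns_iff {x : List ℕ} :
    IsAscSeq x ∧ AvoidsPatterns x ↔ IsClimbing x := by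
  refine ⟨fun ⟨hasc, havoid⟩ => hasc.isClimbing havoid, ?_⟩
  rintro ⟨k, m, t, rfl, ht, htm, -⟩
  exact ⟨isAscSeq_climbWord fun a ha => (htm a ha).trans (by lia), avoidsPatterns_climbWord ht⟩

theorem idxOf_one_climbWord {m : ℕ} (hm : m ≠ 0) (k : ℕ) (t : List ℕ) :
    (climbWord k m t).idxOf 1 = k + 1 := by
  obtain ⟨m, rfl⟩ := Nat.exists_eq_succ_of_ne_zero hm
  have hsplit : climbWord k (m + 1) t = replicate (k + 1) 0 ++ 1 :: (range' 2 m ++ t) := by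
    simp [climbWord, range_eq_range', range'_succ, replicate_succ']
  rw [hsplit, idxOf_append_of_notMem (by simp)]
  simp

theorem climbWord_inj {k k' m m' : ℕ} {t t' : List ℕ} (hm : m ≠ 0) (hm' : m' ≠ 0)
    (ht : ∀ a ∈ t, a ≤ m) (ht' : ∀ a ∈ t', a ≤ m') :
    climbWord k m t = climbWord k' m' t' ↔ k = k' ∧ m = m' ∧ t = t' := by
  refine ⟨fun h => ?_, by rintro ⟨rfl, rfl, rfl⟩; rfl⟩
  obtain rfl : k = k' := by
    have hidx := congrArg (idxOf 1) h
    rwa [idxOf_one_climbWord hm, idxOf_one_climbWord hm', Nat.succ_inj] at hidx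
  obtain rfl : m = m' :=
    le_antisymm (le_of_mem_climbWord ht' (h ▸ self_mem_climbWord k m t))
      (le_of_mem_climbWord ht (h ▸ self_mem_climbWord k m' t'))
  exact ⟨rfl, rfl, append_cancel_left h⟩

/-! ### Counting -/

/-- The weakly decreasing lists of length `r` with entries in `s`, obtained by sorting the
multisets of size `r`. -/
def sortedGELists {α : Type*} [LinearOrder α] (s : Finset α) (r : ℕ) : Finset (List α) :=
  Finset.univ.image fun x : Sym s r => (x.1.map Subtype.val).sort (· ≥ ·)

theorem mem_sortedGELists {α : Type*} [LinearOrder α] {s : Finset α} {r : ℕ} {t : List α} :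
    t ∈ sortedGELists s r ↔ t.length = r ∧ t.SortedGE ∧ ∀ a ∈ t, a ∈ s := by
  simp only [sortedGELists, Finset.mem_image, Finset.mem_univ, true_and]
  constructor
  · rintro ⟨x, rfl⟩
    refine ⟨by simp, (Multiset.pairwise_sort _ _).sortedGE, fun a ha => ?_⟩
    obtain ⟨b, -, rfl⟩ := Multiset.mem_map.1 ((Multiset.mem_sort _).1 ha)
    exact b.2
  · rintro ⟨hlen, hsorted, hmem⟩
    lift t to List s using hmem
    refine ⟨⟨t, by simpa using hlen⟩, ?_⟩
    simpa using mergeSort_eq_self _ hsorted.pairwise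

theorem card_sortedGELists {α : Type*} [LinearOrder α] (s : Finset α) (r : ℕ) :
    (sortedGELists s r).card = s.card.multichoose r := by
  rw [sortedGELists, Finset.card_image_of_injective, Finset.card_univ, Sym.card_sym_eq_multichoose,
    Fintype.card_coe]
  intro x y hxy
  have hmap := congrArg ((↑) : List α → Multiset α) hxy
  simp only [Multiset.sort_eq] at hmap
  exact Subtype.ext (Multiset.map_injective Subtype.val_injective hmap)

theorem mem_sortedGELists_range_succ {m r : ℕ} {t : List ℕ} :
    t ∈ sortedGELists (Finset.range (m + 1)) r ↔
      t.length = r ∧ t.SortedGE ∧ ∀ a ∈ t, a ≤ m := by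
  simp only [mem_sortedGELists, Finset.mem_range, Nat.lt_succ_iff]

/-- Parameters `(s, m, t)` of the words `0ᵏ 0 1 2 ⋯ m t` of length `n + 1` with `m ≥ 1` and `t`
weakly decreasing and bounded by `m`; here `s = n - k` letters follow the `k + 1` leading zeros. -/
def climbParams (n : ℕ) : Finset (Σ _ : ℕ, Σ _ : ℕ, List ℕ) :=
  (Finset.range (n + 1)).sigma fun s => (Finset.Ico 1 (s + 1)).sigma fun m =>
    sortedGELists (Finset.range (m + 1)) (s - m)

theorem mem_climbParams {n s m : ℕ} {t : List ℕ} :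
    ⟨s, m, t⟩ ∈ climbParams n ↔ s ≤ n ∧ (m ≠ 0 ∧ m ≤ s) ∧ t.length = s - m ∧ t.SortedGE ∧
      ∀ a ∈ t, a ≤ m := by
  simp only [climbParams, Finset.mem_sigma, Finset.mem_range, Finset.mem_Ico,
    mem_sortedGELists_range_succ, Nat.lt_succ_iff, Nat.one_le_iff_ne_zero]

theorem sum_Ico_one_choose_add_one (s : ℕ) :
    ∑ m ∈ Finset.Ico 1 (s + 1), s.choose m + 1 = 2 ^ s := by
  rw [← Nat.sum_range_choose, Finset.range_eq_Ico, Finset.sum_eq_sum_Ico_succ_bot s.succ_pos,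
    Nat.choose_zero_right, add_comm]

theorem card_climbParams_add (n : ℕ) : (climbParams n).card + (n + 1) = 2 ^ (n + 1) - 1 := by
  have hcard : (climbParams n).card =
      ∑ s ∈ Finset.range (n + 1), ∑ m ∈ Finset.Ico 1 (s + 1), s.choose m := by
    simp only [climbParams, Finset.card_sigma, card_sortedGELists, Finset.card_range]
    refine Finset.sum_congr rfl fun s _ => Finset.sum_congr rfl fun m hm => ?_
    have hms : m ≤ s := Nat.lt_succ_iff.1 (Finset.mem_Ico.1 hm).2
    rw [Nat.multichoose_eq, ← Nat.choose_symm hms]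
    congr 1
    lia
  calc (climbParams n).card + (n + 1)
      = ∑ s ∈ Finset.range (n + 1), (∑ m ∈ Finset.Ico 1 (s + 1), s.choose m + 1) := by
        simp [hcard, Finset.sum_add_distrib]
    _ = ∑ s ∈ Finset.range (n + 1), 2 ^ s := by simp only [sum_Ico_one_choose_add_one]
    _ = 2 ^ (n + 1) - 1 := Nat.geomSum_eq le_rfl _ |>.trans (by simp)

/-- The words of length `n + 1` with parameters in `climbParams n`, together with the zero word. -/
def climbWords (n : ℕ) : Finset (List ℕ) :=
  insert (climbWord n 0 []) <|
    (climbParams n).image fun p => climbWord (n - p.1) p.2.1 p.2.2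

theorem mem_climbWords {n : ℕ} {x : List ℕ} :
    x ∈ climbWords n ↔ x.length = n + 1 ∧ IsClimbing x := by
  rw [climbWords, Finset.mem_insert, Finset.mem_image]
  constructor
  · rintro (rfl | ⟨⟨s, m, t⟩, hp, rfl⟩)
    · exact ⟨by simp, n, 0, [], rfl, by simp [sortedGE_iff_pairwise]⟩
    · obtain ⟨hs, ⟨hm, hms⟩, hlen, ht, htm⟩ := mem_climbParams.1 hp
      exact ⟨by rw [length_climbWord]; lia, _, m, t, rfl, ht, htm, by lia⟩
  · rintro ⟨hlen, k, m, t, rfl, ht, htm, hmt⟩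
    rw [length_climbWord] at hlen
    rcases eq_or_ne m 0 with rfl | hm
    · obtain rfl := hmt rfl
      obtain rfl : k = n := by simpa using hlen
      exact .inl rfl
    · refine .inr ⟨⟨n - k, m, t⟩, mem_climbParams.2 ⟨by lia, ⟨hm, by lia⟩, by lia, ht, htm⟩, ?_⟩
      dsimp only
      rw [Nat.sub_sub_self (by lia)]

theorem card_climbWords (n : ℕ) : (climbWords n).card = 2 ^ (n + 1) - (n + 1) := by
  have hzero : climbWord n 0 [] ∉
      (climbParams n).image fun p => climbWord (n - p.1) p.2.1 p.2.2 := by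
    rw [Finset.mem_image]
    rintro ⟨⟨s, m, t⟩, hp, h⟩
    have hmem : m ∈ climbWord n 0 [] := h ▸ self_mem_climbWord (n - s) m t
    have hm : m ≤ 0 := le_of_mem_climbWord (by simp) hmem
    exact (mem_climbParams.1 hp).2.1.1 (Nat.le_zero.1 hm)
  rw [climbWords, Finset.card_insert_of_notMem hzero, Finset.card_image_of_injOn]
  · have := card_climbParams_add n
    lia
  · rintro ⟨s, m, t⟩ hp ⟨s', m', t'⟩ hp' h
    obtain ⟨hs, ⟨hm, -⟩, -, -, ht⟩ := mem_climbParams.1 hp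
    obtain ⟨hs', ⟨hm', -⟩, -, -, ht'⟩ := mem_climbParams.1 hp'
    obtain ⟨hk, rfl, rfl⟩ := (climbWord_inj hm hm' ht ht').1 h
    obtain rfl : s = s' := by lia
    rfl

theorem stmt_12 (n : ℕ) (hn : 1 ≤ n) :
    Nat.card {x : List ℕ // x.length = n ∧ IsAscSeq x ∧ Avoids [0, 1, 0, 1] x ∧ Avoids [0, 1, 0, 2] x ∧ Avoids [0, 1, 1, 2] x} = 2 ^ n - n := by
  obtain ⟨n, rfl⟩ := Nat.exists_eq_add_of_le' hn
  rw [← card_climbWords]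
  refine Nat.subtype_card _ fun x => ?_
  rw [mem_climbWords, ← isAscSeq_and_avoidsPatterns_iff, AvoidsPatterns]
end

section
/- For n >= 1, the number of ascent sequences of length n avoiding the three patterns 0101, 0112, and 0121 equals 2^n - n. -/
/-!
Grow the sequences one letter at a time. The nonzero letters of an admissible word read `1, 2, …, k`
followed by `j` further copies of `k`, where `k` is its number of ascents. Its next letter may be
`0`; it may be `k`, for `k > 0`, if and only if the word ends with `k`; and it may be `k + 1` if and
only if `j = 0`. Hence a word with `j > 0` has one extension by `n` letters if it ends with `0` and
`n + 1` if it ends with `k > 0`, while for `j = 0` the numbers are `2 ^ (n + 1) - (n + 1)` and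
`2 ^ (n + 1) - 1` respectively. The word `0` has `j = k = 0`.
-/

section

open scoped List

variable {α : Type*}

/-- The words of length `n` that can be written to the right of `x` so that the result satisfies
`P`: level `n` of the generating tree of `P` below the node `x`. -/
def extensions (P : List α → Prop) (x : List α) (n : ℕ) : Set (List α) :=
  {t | t.length = n ∧ P (x ++ t)}

theorem encard_extensions_zero {P : List α → Prop} {x : List α} (hx : P x) :
    (extensions P x 0).encard = 1 := by
  rw [Set.encard_eq_one]
  refine ⟨[], Set.ext fun t ↦ ?_⟩
  simp only [extensions, Set.mem_ofPred_eq, List.length_eq_zero_iff, Set.mem_singleton_iff]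
  exact ⟨And.left, by rintro rfl; simpa using hx⟩

theorem encard_extensions_succ {P : List α → Prop} {x : List α} {s : Finset α}
    (hs : ∀ v t, P (x ++ v :: t) → v ∈ s) (n : ℕ) :
    (extensions P x (n + 1)).encard = ∑ v ∈ s, (extensions P (x ++ [v]) n).encard := by
  have hunion : extensions P x (n + 1) =
      ⋃ v ∈ (s : Set α), List.cons v '' extensions P (x ++ [v]) n := by
    ext t
    cases t with
    | nil => simp [extensions]
    | cons v t => simpa [extensions, and_comm (a := v ∈ s)] using fun _ ↦ hs v t
  have hdisj : (s : Set α).PairwiseDisjoint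
      fun v ↦ List.cons v '' extensions P (x ++ [v]) n := by
    intro v _ w _ hvw
    rw [Function.onFun, Set.disjoint_left]
    rintro _ ⟨t, _, rfl⟩ ⟨u, _, h⟩
    exact hvw (List.head_eq_of_cons_eq h).symm
  rw [hunion, s.finite_toSet.encard_biUnion hdisj, finsum_mem_coe_finset]
  exact Finset.sum_congr rfl fun v _ ↦ List.cons_injective.encard_image _

theorem append_singleton_sublist_append_singleton_iff {l x : List α} {a v : α} :
    l ++ [a] <+ x ++ [v] ↔ l ++ [a] <+ x ∨ a = v ∧ l <+ x := by
  rw [← List.reverse_sublist, ← List.reverse_sublist (l₁ := l ++ [a]) (l₂ := x),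
    ← List.reverse_sublist (l₁ := l) (l₂ := x)]
  simp only [List.reverse_append, List.reverse_singleton, List.singleton_append]
  exact List.cons_sublist_cons'

variable {x : List ℕ} {v w : ℕ}

theorem asc_append_singleton (hw : x.getLast? = some w) :
    asc (x ++ [v]) = asc x + if w < v then 1 else 0 := by
  obtain ⟨y, rfl⟩ := List.getLast?_eq_some_iff.1 hw
  have hprefix : ∀ j ∈ List.range y.length,
      decide ((y ++ [w] ++ [v]).getD j 0 < (y ++ [w] ++ [v]).getD (j + 1) 0) =
        decide ((y ++ [w]).getD j 0 < (y ++ [w]).getD (j + 1) 0) := by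
    intro j hj
    rw [List.mem_range] at hj
    rw [List.getD_append _ _ _ j (by simp; omega),
      List.getD_append _ _ _ (j + 1) (by simp; omega)]
  have hy : (y ++ [w] ++ [v]).getD y.length 0 = w := by simp
  have hy' : (y ++ [w] ++ [v]).getD (y.length + 1) 0 = v := by simp
  simp only [asc, List.length_append, List.length_singleton, Nat.add_sub_cancel]
  rw [List.range_succ, List.filter_append, List.length_append, List.filter_congr hprefix,
    List.filter_singleton, hy, hy']
  by_cases hwv : w < v <;> simp [hwv]

theorem asc_le_asc_append_singleton (x : List ℕ) (v : ℕ) : asc x ≤ asc (x ++ [v]) := by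
  rcases x.eq_nil_or_concat with rfl | ⟨y, w, rfl⟩
  · exact Nat.zero_le _
  · rw [asc_append_singleton (w := w) (by simp)]
    exact Nat.le_add_right _ _

theorem isAscSeq_append_singleton_iff (hx : x ≠ []) :
    IsAscSeq (x ++ [v]) ↔ IsAscSeq x ∧ v ≤ 1 + asc x := by
  have hpos : 0 < x.length := List.length_pos_iff.2 hx
  have hget {i : ℕ} (hi : i < x.length) : (x ++ [v]).getD i 0 = x.getD i 0 :=
    List.getD_append _ _ _ _ hi
  have htake {i : ℕ} (hi : i < x.length) : (x ++ [v]).take i = x.take i :=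
    List.take_append_of_le_length hi.le
  have hlast : (x ++ [v]).getD x.length 0 = v := by simp
  have htake_last : (x ++ [v]).take x.length = x := List.take_left
  simp only [IsAscSeq, List.length_append, List.length_singleton, Nat.lt_succ_iff_lt_or_eq]
  grind

theorem contains_four_iff {p q r s : ℕ} :
    Contains [p, q, r, s] x ↔ ∃ a b c d, [a, b, c, d] <+ x ∧
      ∀ i j : Fin 4, ![a, b, c, d] i < ![a, b, c, d] j ↔ ![p, q, r, s] i < ![p, q, r, s] j := by
  constructor
  · rintro ⟨y, hyx, hlen, hy⟩
    obtain ⟨a, b, c, d, rfl⟩ := List.length_eq_four.1 hlen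
    refine ⟨a, b, c, d, hyx, fun i j ↦ ?_⟩
    have := hy i j i.2 j.2
    fin_cases i <;> fin_cases j <;> exact this
  · rintro ⟨a, b, c, d, hyx, hy⟩
    refine ⟨_, hyx, rfl, fun i j hi hj ↦ ?_⟩
    have := hy ⟨i, hi⟩ ⟨j, hj⟩
    simp only [List.length_cons, List.length_nil] at hi hj
    interval_cases i <;> interval_cases j <;> exact this

theorem avoids_0101_iff : Avoids [0, 1, 0, 1] x ↔ ∀ a b, a < b → ¬[a, b, a, b] <+ x := by
  rw [Avoids, contains_four_iff]
  constructor
  · intro h a b hab hs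
    exact h ⟨a, b, a, b, hs, by simp [Fin.forall_fin_succ, hab, hab.le]⟩
  · rintro h ⟨a, b, c, d, hs, hord⟩
    have hab : a < b := by simpa using hord 0 1
    obtain rfl : a = c := le_antisymm (by simpa using hord 2 0) (by simpa using hord 0 2)
    obtain rfl : b = d := le_antisymm (by simpa using hord 3 1) (by simpa using hord 1 3)
    exact h a b hab hs

theorem avoids_0112_iff :
    Avoids [0, 1, 1, 2] x ↔ ∀ a b c, a < b → b < c → ¬[a, b, b, c] <+ x := by
  rw [Avoids, contains_four_iff]
  constructor
  · intro h a b c hab hbc hs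
    exact h ⟨a, b, b, c, hs,
      by simp [Fin.forall_fin_succ, hab, hbc, hab.le, hbc.le, hab.trans hbc, (hab.trans hbc).le]⟩
  · rintro h ⟨a, b, c, d, hs, hord⟩
    have hab : a < b := by simpa using hord 0 1
    have hbd : b < d := by simpa using hord 1 3
    obtain rfl : b = c := le_antisymm (by simpa using hord 2 1) (by simpa using hord 1 2)
    exact h a b d hab hbd hs

theorem avoids_0121_iff :
    Avoids [0, 1, 2, 1] x ↔ ∀ a b c, a < b → b < c → ¬[a, b, c, b] <+ x := by
  rw [Avoids, contains_four_iff]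
  constructor
  · intro h a b c hab hbc hs
    exact h ⟨a, b, c, b, hs,
      by simp [Fin.forall_fin_succ, hab, hbc, hab.le, hbc.le, hab.trans hbc, (hab.trans hbc).le]⟩
  · rintro h ⟨a, b, c, d, hs, hord⟩
    have hab : a < b := by simpa using hord 0 1
    have hbc : b < c := by simpa using hord 1 2
    obtain rfl : b = d := le_antisymm (by simpa using hord 3 1) (by simpa using hord 1 3)
    exact h a b c hab hbc hs

theorem four_sublist_append_singleton_iff {a b c d : ℕ} :
    [a, b, c, d] <+ x ++ [v] ↔ [a, b, c, d] <+ x ∨ d = v ∧ [a, b, c] <+ x :=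
  append_singleton_sublist_append_singleton_iff (l := [a, b, c])

theorem avoids_0101_append_singleton_iff :
    Avoids [0, 1, 0, 1] (x ++ [v]) ↔
      Avoids [0, 1, 0, 1] x ∧ ∀ a, a < v → ¬[a, v, a] <+ x := by
  simp only [avoids_0101_iff, four_sublist_append_singleton_iff]
  grind

theorem avoids_0112_append_singleton_iff :
    Avoids [0, 1, 1, 2] (x ++ [v]) ↔
      Avoids [0, 1, 1, 2] x ∧ ∀ a b, a < b → b < v → ¬[a, b, b] <+ x := by
  simp only [avoids_0112_iff, four_sublist_append_singleton_iff]
  grind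

theorem avoids_0121_append_singleton_iff :
    Avoids [0, 1, 2, 1] (x ++ [v]) ↔
      Avoids [0, 1, 2, 1] x ∧ ∀ a c, a < v → v < c → ¬[a, v, c] <+ x := by
  simp only [avoids_0121_iff, four_sublist_append_singleton_iff]
  grind

/-- The ascent sequences counted by the theorem: those avoiding 0101, 0112 and 0121. -/
def Admissible (x : List ℕ) : Prop :=
  IsAscSeq x ∧ Avoids [0, 1, 0, 1] x ∧ Avoids [0, 1, 1, 2] x ∧ Avoids [0, 1, 2, 1] x

theorem admissible_append_singleton_iff (hx : x ≠ []) :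
    Admissible (x ++ [v]) ↔ Admissible x ∧ v ≤ 1 + asc x ∧
      (∀ a, a < v → ¬[a, v, a] <+ x) ∧
      (∀ a b, a < b → b < v → ¬[a, b, b] <+ x) ∧
      (∀ a c, a < v → v < c → ¬[a, v, c] <+ x) := by
  rw [Admissible, isAscSeq_append_singleton_iff hx, avoids_0101_append_singleton_iff,
    avoids_0112_append_singleton_iff, avoids_0121_append_singleton_iff, Admissible]
  tauto

namespace Admissible

theorem ne_nil (h : Admissible x) : x ≠ [] :=
  h.1.1

theorem exists_eq_zero_cons (h : Admissible x) : ∃ t, x = 0 :: t := by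
  obtain ⟨⟨hne, hzero, _⟩, _⟩ := h
  cases x with
  | nil => exact absurd rfl hne
  | cons a t => exact ⟨t, by simpa using hzero⟩

theorem of_append {t : List ℕ} (hx : x ≠ []) (h : Admissible (x ++ t)) : Admissible x := by
  induction t using List.reverseRecOn with
  | nil => simpa using h
  | append_singleton t v ih =>
    rw [← List.append_assoc, admissible_append_singleton_iff (by simp [hx])] at h
    exact ih h.1

theorem of_append_cons {t : List ℕ} (h : Admissible (x ++ v :: t)) :
    Admissible (x ++ [v]) :=
  of_append (t := t) (by simp) (by simpa using h)

theorem append_zero (h : Admissible x) : Admissible (x ++ [0]) := by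
  simpa [admissible_append_singleton_iff h.ne_nil] using h

theorem le_one_add_asc (h : Admissible (x ++ [w])) : w ≤ 1 + asc (x ++ [w]) := by
  rcases eq_or_ne x [] with rfl | hx
  · obtain ⟨t, ht⟩ := h.exists_eq_zero_cons
    simp_all
  · have hw : w ≤ 1 + asc x := ((admissible_append_singleton_iff hx).1 h).2.1
    exact hw.trans (Nat.add_le_add_left (asc_le_asc_append_singleton x w) 1)

-- No forbidden pattern ends with two equal letters, so an occurrence ending at the second `w` does
-- not use the first one and could end there instead.
theorem append_self (h : Admissible (x ++ [w])) : Admissible (x ++ [w] ++ [w]) := by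
  have ⟨_, h0101, h0112, h0121⟩ := h
  have of_ne {a b c : ℕ} (hc : c ≠ w) (hs : [a, b, c] <+ x ++ [w]) : [a, b, c, w] <+ x ++ [w] := by
    have hs' : [a, b, c] <+ x := by
      simpa [hc] using (append_singleton_sublist_append_singleton_iff (l := [a, b])).1 hs
    exact hs'.append (List.Sublist.refl [w])
  refine (admissible_append_singleton_iff (by simp)).2 ⟨h, h.le_one_add_asc, ?_, ?_, ?_⟩
  · exact fun a ha hs ↦ avoids_0101_iff.1 h0101 a w ha (of_ne ha.ne hs)
  · exact fun a b hab hb hs ↦ avoids_0112_iff.1 h0112 a b w hab hb (of_ne hb.ne hs)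
  · exact fun a c ha hc hs ↦ avoids_0121_iff.1 h0121 a w c ha hc (of_ne hc.ne' hs)

end Admissible

/-- The shape of an admissible word `x` with `k` ascents and last letter `w`: its nonzero letters
are `1, 2, …, k` followed by `j` further copies of `k`. -/
structure IsStaircase (k j w : ℕ) (x : List ℕ) : Prop where
  admissible : Admissible x
  asc_eq : asc x = k
  filter_pos : x.filter (0 < ·) = List.range' 1 k ++ List.replicate j k
  getLast?_eq : x.getLast? = some w

theorem isStaircase_singleton_zero : IsStaircase 0 0 0 [0] where
  admissible := by
    refine ⟨⟨by simp, rfl, fun i hi hi' ↦ ?_⟩, ?_, ?_, ?_⟩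
    · rw [List.length_singleton] at hi'
      omega
    all_goals
      rintro ⟨y, hy, hlen, -⟩
      simpa [hlen] using hy.length_le
  asc_eq := rfl
  filter_pos := rfl
  getLast?_eq := rfl

namespace IsStaircase

variable {k j n : ℕ}

theorem le_of_mem (h : IsStaircase k j w x) (hv : v ∈ x) : v ≤ k := by
  rcases Nat.eq_zero_or_pos v with rfl | hpos
  · exact k.zero_le
  have hmem : v ∈ List.range' 1 k ++ List.replicate j k := by
    rw [← h.filter_pos]
    simpa using ⟨hv, hpos⟩
  simp only [List.mem_append, List.mem_range'_1, List.mem_replicate] at hmem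
  omega

theorem zero_cons_sublist {l : List ℕ} (h : IsStaircase k j w x)
    (hl : l <+ List.range' 1 k ++ List.replicate j k) : 0 :: l <+ x := by
  obtain ⟨t, rfl⟩ := h.admissible.exists_eq_zero_cons
  have ht : l <+ t.filter (0 < ·) := by simpa [← h.filter_pos] using hl
  exact (ht.trans List.filter_sublist).cons_cons 0

theorem last_le (h : IsStaircase k j w x) : w ≤ k :=
  h.le_of_mem (List.mem_of_getLast? h.getLast?_eq)

theorem append_zero (h : IsStaircase k j w x) : IsStaircase k j 0 (x ++ [0]) where
  admissible := h.admissible.append_zero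
  asc_eq := by simp [asc_append_singleton h.getLast?_eq, h.asc_eq]
  filter_pos := by simp [h.filter_pos]
  getLast?_eq := by simp

theorem append_self (h : IsStaircase k j k x) (hk : 0 < k) :
    IsStaircase k (j + 1) k (x ++ [k]) where
  admissible := by
    obtain ⟨y, rfl⟩ := List.getLast?_eq_some_iff.1 h.getLast?_eq
    exact h.admissible.append_self
  asc_eq := by simp [asc_append_singleton h.getLast?_eq, h.asc_eq]
  filter_pos := by simp [h.filter_pos, hk, List.replicate_succ']
  getLast?_eq := by simp

theorem append_succ (h : IsStaircase k 0 w x) :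
    IsStaircase (k + 1) 0 (k + 1) (x ++ [k + 1]) where
  admissible := by
    have hnew : k + 1 ∉ x := fun hmem ↦ (h.le_of_mem hmem).not_gt k.lt_succ_self
    have hnodup : (x.filter (0 < ·)).Nodup := by
      simpa [h.filter_pos] using List.nodup_range'
    refine (admissible_append_singleton_iff h.admissible.ne_nil).2
      ⟨h.admissible, by rw [h.asc_eq, add_comm], fun a _ hs ↦ hnew (hs.subset (by simp)),
        fun a b hab _ hs ↦ List.nodup_iff_sublist.1 hnodup b ?_,
        fun a c _ _ hs ↦ hnew (hs.subset (by simp))⟩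
    have hbb : [b, b] <+ x := (List.sublist_cons_self a [b, b]).trans hs
    simpa [Nat.zero_lt_of_lt hab] using hbb.filter (0 < ·)
  asc_eq := by
    simp [asc_append_singleton h.getLast?_eq, h.asc_eq, Nat.lt_succ_of_le h.last_le]
  filter_pos := by simp [h.filter_pos, List.range'_1_concat, add_comm]
  getLast?_eq := by simp

theorem pos_of_pos (h : IsStaircase k j w x) (hj : 0 < j) : 0 < k := by
  have hmem : k ∈ x.filter (0 < ·) := by
    rw [h.filter_pos]
    simp [hj.ne']
  simpa using (List.mem_filter.1 hmem).2

theorem eq_zero_or_eq_or_eq_succ (h : IsStaircase k j w x) (hv : Admissible (x ++ [v])) :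
    v = 0 ∨ v = k ∨ v = k + 1 ∧ j = 0 := by
  obtain ⟨-, hle, -, h0112, h0121⟩ :=
    (admissible_append_singleton_iff h.admissible.ne_nil).1 hv
  rw [h.asc_eq] at hle
  by_contra! hne
  obtain ⟨hv0, hvk, hvj⟩ := hne
  rcases hvk.lt_or_gt with hlt | hgt
  · have hvk_sub : [v, k] <+ List.range' 1 k := by
      obtain ⟨i, rfl⟩ : ∃ i, k = i + 1 := ⟨k - 1, by omega⟩
      rw [List.range'_1_concat, add_comm 1 i]
      exact (List.singleton_sublist.2 (List.mem_range'_1.2 (by omega))).append (.refl [i + 1])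
    exact h0121 0 k (by omega) hlt
      (h.zero_cons_sublist (hvk_sub.trans (List.sublist_append_left ..)))
  · have hj : 0 < j := by omega
    have hk : 0 < k := h.pos_of_pos hj
    have hkk_sub : [k, k] <+ List.range' 1 k ++ List.replicate j k :=
      (List.singleton_sublist.2 (List.mem_range'_1.2 (by omega))).append
        (List.singleton_sublist.2 (List.mem_replicate.2 ⟨hj.ne', rfl⟩))
    exact h0112 0 k hk hgt (h.zero_cons_sublist hkk_sub)

theorem not_admissible_append_top (h : IsStaircase k j 0 x) (hk : 0 < k) :
    ¬Admissible (x ++ [k]) := by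
  intro hadm
  obtain ⟨-, -, h0101, -⟩ := (admissible_append_singleton_iff h.admissible.ne_nil).1 hadm
  refine h0101 0 hk ?_
  have hsub : [0, k] <+ x := h.zero_cons_sublist
    (List.singleton_sublist.2 (List.mem_append_left _ (List.mem_range'_1.2 (by omega))))
  obtain ⟨y, rfl⟩ := List.getLast?_eq_some_iff.1 h.getLast?_eq
  have hsub' : [0, k] <+ y := by
    simpa [hk.ne'] using (append_singleton_sublist_append_singleton_iff (l := [0])).1 hsub
  exact hsub'.append (.refl [0])

theorem encard_extensions_last_zero_of_pos (h : IsStaircase k j 0 x) (hj : 0 < j) :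
    (extensions Admissible x n).encard = 1 := by
  induction n generalizing x with
  | zero => exact encard_extensions_zero h.admissible
  | succ n ih =>
    have hchildren (v t) (ht : Admissible (x ++ v :: t)) : v ∈ ({0} : Finset ℕ) := by
      have hv := ht.of_append_cons
      rw [Finset.mem_singleton]
      rcases h.eq_zero_or_eq_or_eq_succ hv with rfl | rfl | ⟨-, rfl⟩
      · rfl
      · exact absurd hv (h.not_admissible_append_top (h.pos_of_pos hj))
      · exact absurd hj (lt_irrefl 0)
    rw [encard_extensions_succ hchildren, Finset.sum_singleton, ih h.append_zero]

theorem encard_extensions_last_top_of_pos (h : IsStaircase k j k x) (hj : 0 < j) :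
    (extensions Admissible x n).encard = n + 1 := by
  induction n generalizing x j with
  | zero => simpa using encard_extensions_zero h.admissible
  | succ n ih =>
    have hk : 0 < k := h.pos_of_pos hj
    have hchildren (v t) (ht : Admissible (x ++ v :: t)) : v ∈ ({0, k} : Finset ℕ) := by
      rcases h.eq_zero_or_eq_or_eq_succ ht.of_append_cons with rfl | rfl | ⟨-, rfl⟩
      · simp
      · simp
      · exact absurd hj (lt_irrefl 0)
    rw [encard_extensions_succ hchildren, Finset.sum_pair hk.ne,
      h.append_zero.encard_extensions_last_zero_of_pos hj, ih (h.append_self hk) j.succ_pos]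
    push_cast
    ring

theorem encard_extensions_succ_last_zero (h : IsStaircase k 0 0 x) :
    (extensions Admissible x (n + 1)).encard =
      (extensions Admissible (x ++ [0]) n).encard +
        (extensions Admissible (x ++ [k + 1]) n).encard := by
  have hchildren (v t) (ht : Admissible (x ++ v :: t)) : v ∈ ({0, k + 1} : Finset ℕ) := by
    have hv := ht.of_append_cons
    rcases h.eq_zero_or_eq_or_eq_succ hv with rfl | rfl | ⟨rfl, -⟩
    · simp
    · rcases Nat.eq_zero_or_pos v with rfl | hpos
      · simp
      · exact absurd hv (h.not_admissible_append_top hpos)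
    · simp
  rw [encard_extensions_succ hchildren, Finset.sum_pair k.succ_ne_zero.symm]

theorem encard_extensions_succ_last_top (h : IsStaircase k 0 k x) (hk : 0 < k) :
    (extensions Admissible x (n + 1)).encard =
      (extensions Admissible (x ++ [0]) n).encard +
        ((extensions Admissible (x ++ [k]) n).encard +
          (extensions Admissible (x ++ [k + 1]) n).encard) := by
  have hchildren (v t) (ht : Admissible (x ++ v :: t)) : v ∈ ({0, k, k + 1} : Finset ℕ) := by
    rcases h.eq_zero_or_eq_or_eq_succ ht.of_append_cons with rfl | rfl | ⟨rfl, -⟩ <;> simp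
  rw [encard_extensions_succ hchildren, Finset.sum_insert (by simp [hk.ne]),
    Finset.sum_pair k.succ_ne_self.symm]

theorem encard_extensions_of_no_repeats (n : ℕ) :
    (∀ {k x}, IsStaircase k 0 0 x →
      (extensions Admissible x n).encard = (2 ^ (n + 1) - (n + 1) : ℕ)) ∧
    ∀ {k x}, IsStaircase k 0 k x → 0 < k →
      (extensions Admissible x n).encard = (2 ^ (n + 1) - 1 : ℕ) := by
  induction n with
  | zero =>
    exact ⟨fun h ↦ by simpa using encard_extensions_zero h.admissible,
      fun h _ ↦ by simpa using encard_extensions_zero h.admissible⟩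
  | succ n ih =>
    obtain ⟨ih_zero, ih_top⟩ := ih
    have hpow : n + 1 < 2 ^ (n + 1) := Nat.lt_two_pow_self
    constructor
    · intro k x h
      rw [h.encard_extensions_succ_last_zero, ih_zero h.append_zero,
        ih_top h.append_succ k.succ_pos]
      norm_cast
      rw [pow_succ 2 (n + 1)]
      omega
    · intro k x h hk
      rw [h.encard_extensions_succ_last_top hk, ih_zero h.append_zero,
        (h.append_self hk).encard_extensions_last_top_of_pos one_pos,
        ih_top h.append_succ k.succ_pos]
      norm_cast
      rw [pow_succ 2 (n + 1)]
      omega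

end IsStaircase

theorem encard_extensions_admissible_nil (n : ℕ) :
    (extensions Admissible [] (n + 1)).encard = (2 ^ (n + 1) - (n + 1) : ℕ) := by
  have hfirst (v t) (ht : Admissible ([] ++ v :: t)) : v ∈ ({0} : Finset ℕ) := by
    obtain ⟨u, hu⟩ := ht.exists_eq_zero_cons
    exact Finset.mem_singleton.2 (List.head_eq_of_cons_eq hu)
  rw [encard_extensions_succ hfirst, Finset.sum_singleton, List.nil_append]
  exact (IsStaircase.encard_extensions_of_no_repeats n).1 isStaircase_singleton_zero

end

theorem stmt_13 (n : ℕ) (hn : 1 ≤ n) :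
    Nat.card {x : List ℕ // x.length = n ∧ IsAscSeq x ∧ Avoids [0, 1, 0, 1] x ∧ Avoids [0, 1, 1, 2] x ∧ Avoids [0, 1, 2, 1] x} = 2 ^ n - n := by
  obtain ⟨m, rfl⟩ := Nat.exists_eq_succ_of_ne_zero (Nat.one_le_iff_ne_zero.1 hn)
  change (extensions Admissible [] (m + 1)).ncard = 2 ^ (m + 1) - (m + 1)
  rw [Set.ncard, encard_extensions_admissible_nil, ENat.toNat_natCast]
end
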